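/- arXiv:2107.09248 — 4 statements merged into one kernel-verified Lean document; each statement's English description precedes it below -/
import Mathlib

section
/- Gårding inequality (coercivity) for the bilinear form of the credit rating migration problem: suppose in addition that |σ'(x)| ≤ K for all x, where K ≥ 0. Set C₁ = σ_H²/2 and C₂ = (σ_L·K)/2 + σ_H²/2. Then C₁ > 0 and for every smooth function u : ℝ → ℝ with compact support contained in Ω, a(u,u) ≥ C₁ ‖u‖₁² − C₂ ‖u‖², where ‖u‖ is the L²-norm and ‖u‖₁ is the H¹-norm. -/
open MeasureTheory Real

/-- Gårding inequality (coercivity) for the bilinear form of the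
credit rating migration problem: with `C₁ = σ_H²/2` and `C₂ = σ_L·K/2 + σ_H²/2`,
one has `C₁ > 0` and `a(u,u) ≥ C₁‖u‖₁² − C₂‖u‖²`. -/
theorem bilinear_form_garding
    (α β : ℝ) (hαβ : α < β)
    (r : ℝ) (hr : 0 < r)
    (σH σL : ℝ) (hσH : 0 < σH) (hHL : σH < σL)
    (σ : ℝ → ℝ) (hσ : ContDiff ℝ 1 σ)
    (hσ_lb : ∀ x, σH ≤ σ x) (hσ_ub : ∀ x, σ x ≤ σL)
    (K : ℝ) (hK : 0 ≤ K) (hσ' : ∀ x, |deriv σ x| ≤ K) :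
    σH^2 / 2 > 0 ∧
    ∀ u : ℝ → ℝ, ContDiff ℝ (⊤ : ℕ∞) u → HasCompactSupport u →
      tsupport u ⊆ Set.Ioo α β →
      (∫ x : ℝ, (1/2) * (σ x)^2 * deriv u x * deriv u x)
        + (∫ x : ℝ, (r + (1/2) * (σ x)^2) * deriv u x * u x)
        ≥ (σH^2 / 2) * (Real.sqrt (∫ x : ℝ, (u x)^2 + (deriv u x)^2))^2
          - (σL * K / 2 + σH^2 / 2) * (Real.sqrt (∫ x : ℝ, (u x)^2))^2 := by
  refine ⟨by positivity, ?_⟩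
  intro u hu hc _
  have hud : Differentiable ℝ u := hu.differentiable (by simp)
  have huc : Continuous u := hu.continuous
  have hu'c : Continuous (deriv u) := hu.continuous_deriv (by simp)
  have hσd : Differentiable ℝ σ := hσ.differentiable (by simp)
  have hσc : Continuous σ := hσ.continuous
  have hσ'c : Continuous (deriv σ) := hσ.continuous_deriv (by simp)
  have hc' : HasCompactSupport (deriv u) := hc.deriv
  have key1 : ∀ f : ℝ → ℝ, Continuous f → Integrable (fun x => f x * u x) := fun f hf =>
    (hf.mul huc).integrable_of_hasCompactSupport hc.mul_left
  have key2 : ∀ f : ℝ → ℝ, Continuous f → Integrable (fun x => f x * deriv u x) := fun f hf =>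
    (hf.mul hu'c).integrable_of_hasCompactSupport hc'.mul_left
  have iA : Integrable (fun x => (1/2) * (σ x)^2 * deriv u x * deriv u x) :=
    key2 _ (by fun_prop)
  have iB : Integrable (fun x => (r + (1/2) * (σ x)^2) * deriv u x * u x) :=
    key1 _ (by fun_prop)
  have iD : Integrable (fun x => (1/2) * σ x * deriv σ x * u x * u x) :=
    key1 _ (by fun_prop)
  have iU : Integrable (fun x => (u x)^2) := by
    simpa [pow_two] using key1 u huc
  have iU' : Integrable (fun x => (deriv u x)^2) := by
    simpa [pow_two] using key2 _ hu'c
  have iG : Integrable (fun x => (1/2) * (r + (1/2) * (σ x)^2) * u x * u x) :=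
    key1 _ (by fun_prop)
  have h0 : ∫ x : ℝ, ((r + (1/2) * (σ x)^2) * deriv u x * u x
      + (1/2) * σ x * deriv σ x * u x * u x) = 0 := by
    refine integral_eq_zero_of_hasDerivAt_of_integrable
      (f := fun x => (1/2) * (r + (1/2) * (σ x)^2) * u x * u x) (fun x => ?_) (iB.add iD) iG
    have h1 := (hσd x).hasDerivAt
    have h2 := (hud x).hasDerivAt
    refine HasDerivAt.congr_deriv (f := fun x => (1/2) * (r + (1/2) * (σ x)^2) * u x * u x)
      ((((((h1.pow 2).const_mul (1/2)).const_add r).const_mul (1/2)).mul h2).mul h2) ?_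
    simp only [Pi.mul_apply, Pi.pow_apply]
    push_cast
    ring
  rw [integral_add iB iD] at h0
  rw [Real.sq_sqrt (integral_nonneg fun x => by positivity),
    Real.sq_sqrt (integral_nonneg fun x => by positivity), integral_add iU iU']
  have hA : (σH^2/2) * ∫ x, (deriv u x)^2 ≤ ∫ x, (1/2) * (σ x)^2 * deriv u x * deriv u x := by
    rw [← integral_const_mul]
    refine integral_mono (iU'.const_mul _) iA fun x => ?_
    have h : σH^2 ≤ (σ x)^2 := pow_le_pow_left₀ hσH.le (hσ_lb x) 2
    have := mul_le_mul_of_nonneg_right h (sq_nonneg (deriv u x))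
    show σH^2/2 * (deriv u x)^2 ≤ (1/2) * (σ x)^2 * deriv u x * deriv u x
    nlinarith
  have hD : ∫ x, (1/2) * σ x * deriv σ x * u x * u x ≤ (σL * K / 2) * ∫ x, (u x)^2 := by
    rw [← integral_const_mul]
    refine integral_mono iD (iU.const_mul _) fun x => ?_
    have h3 : 0 ≤ σ x := hσH.le.trans (hσ_lb x)
    have h : σ x * deriv σ x ≤ σL * K :=
      (mul_le_mul_of_nonneg_left ((le_abs_self _).trans (hσ' x)) h3).trans
        (mul_le_mul_of_nonneg_right (hσ_ub x) hK)
    have := mul_le_mul_of_nonneg_right h (sq_nonneg (u x))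
    show (1/2) * σ x * deriv σ x * u x * u x ≤ σL * K / 2 * (u x)^2
    nlinarith
  linarith
end

section
/- Nonnegativity of the quadratic form under nonincreasing volatility: suppose in addition that σ'(x) ≤ 0 for all x ∈ Ω. Then for every smooth function u : ℝ → ℝ with compact support contained in Ω, a(u,u) ≥ (σ_H²/2) ∫_ℝ u'(x)² dx; in particular a(u,u) ≥ 0. -/
open MeasureTheory Real

/-- Nonnegativity of the quadratic form under nonincreasing
volatility: if `σ' ≤ 0` on `Ω`, then `a(u,u) ≥ (σ_H²/2) ∫ u'²`, and in
particular `a(u,u) ≥ 0`. -/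
theorem quadratic_form_nonneg_of_nonincreasing_vol
    (α β : ℝ) (hαβ : α < β)
    (r : ℝ) (hr : 0 < r)
    (σH σL : ℝ) (hσH : 0 < σH) (hHL : σH < σL)
    (σ : ℝ → ℝ) (hσ : ContDiff ℝ 1 σ)
    (hσ_lb : ∀ x, σH ≤ σ x) (hσ_ub : ∀ x, σ x ≤ σL)
    (hσ' : ∀ x ∈ Set.Ioo α β, deriv σ x ≤ 0)
    (u : ℝ → ℝ)
    (hu : ContDiff ℝ (⊤ : ℕ∞) u)
    (hu_supp : HasCompactSupport u)
    (hu_suppΩ : tsupport u ⊆ Set.Ioo α β) :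
    ((∫ x : ℝ, (1/2) * (σ x)^2 * deriv u x * deriv u x)
        + (∫ x : ℝ, (r + (1/2) * (σ x)^2) * deriv u x * u x)
      ≥ (σH^2 / 2) * ∫ x : ℝ, (deriv u x)^2) ∧
    ((∫ x : ℝ, (1/2) * (σ x)^2 * deriv u x * deriv u x)
        + (∫ x : ℝ, (r + (1/2) * (σ x)^2) * deriv u x * u x) ≥ 0) := by
  have hud : Differentiable ℝ u := hu.differentiable (by simp)
  have huc : Continuous u := hu.continuous
  have hu'c : Continuous (deriv u) := hu.continuous_deriv (by exact_mod_cast le_top)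
  have hu's : HasCompactSupport (deriv u) := hu_supp.deriv
  have hσd : Differentiable ℝ σ := hσ.differentiable (by simp)
  have hσc : Continuous σ := hσ.continuous
  have hσ'c : Continuous (deriv σ) := hσ.continuous_deriv le_rfl
  have i1 : Integrable (fun x => (1/2) * (σ x)^2 * deriv u x * deriv u x) :=
    Continuous.integrable_of_hasCompactSupport (by fun_prop) hu's.mul_left
  have i2 : Integrable (fun x => (r + (1/2) * (σ x)^2) * deriv u x * u x) :=
    Continuous.integrable_of_hasCompactSupport (by fun_prop) hu_supp.mul_left
  have i3 : Integrable (fun x => σ x * deriv σ x * u x / 2 * u x) :=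
    Continuous.integrable_of_hasCompactSupport (by fun_prop) hu_supp.mul_left
  have i4 : Integrable (fun x => (r + (1/2) * (σ x)^2) * u x / 2 * u x) :=
    Continuous.integrable_of_hasCompactSupport (by fun_prop) hu_supp.mul_left
  have i5 : Integrable (fun x => (σH^2 / 2) * (deriv u x)^2) := by
    have : Integrable (fun x => (σH^2 / 2) * deriv u x * deriv u x) :=
      Continuous.integrable_of_hasCompactSupport (by fun_prop) hu's.mul_left
    refine this.congr (Filter.Eventually.of_forall fun x => ?_)
    try simp only
    ring
  have hz : ∫ x, ((r + (1/2) * (σ x)^2) * deriv u x * u x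
      + σ x * deriv σ x * u x / 2 * u x) = 0 := by
    refine integral_eq_zero_of_hasDerivAt_of_integrable (fun x => ?_) (i2.add i3) i4
    have h1 := (hud x).hasDerivAt
    have h2 := (hσd x).hasDerivAt
    have h := (((((h2.pow 2).const_mul (1/2)).const_add r).mul h1).div_const 2).mul h1
    refine HasDerivAt.congr_deriv h ?_
    simp
    ring
  rw [integral_add i2 i3] at hz
  have hneg : ∫ x, σ x * deriv σ x * u x / 2 * u x ≤ 0 := by
    refine integral_nonpos fun x => ?_
    simp only [Pi.zero_apply]
    by_cases hx : x ∈ tsupport u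
    · have h1 := hσ' x (hu_suppΩ hx)
      have h2 : 0 ≤ σ x := hσH.le.trans (hσ_lb x)
      have h3 := mul_nonneg (mul_nonneg h2 (neg_nonneg.2 h1)) (sq_nonneg (u x))
      nlinarith
    · simp [image_eq_zero_of_notMem_tsupport hx]
  have hmain : (σH^2 / 2) * ∫ x, (deriv u x)^2
      ≤ ∫ x, (1/2) * (σ x)^2 * deriv u x * deriv u x := by
    rw [← integral_const_mul]
    refine integral_mono i5 i1 fun x => ?_
    have h1 : σH^2 ≤ (σ x)^2 := pow_le_pow_left₀ hσH.le (hσ_lb x) 2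
    have h2 := mul_le_mul_of_nonneg_right h1 (sq_nonneg (deriv u x))
    try simp only
    nlinarith
  have hpos : 0 ≤ (σH^2 / 2) * ∫ x, (deriv u x)^2 :=
    mul_nonneg (by positivity) (integral_nonneg fun x => sq_nonneg _)
  constructor <;> linarith
end

section
/- Unconditional stability of the backward Euler Galerkin scheme: let V be a real inner product space, Δt > 0, and for each n ≥ 1 let aₙ : V × V → ℝ be a bilinear form with aₙ(v,v) ≥ 0 for all v ∈ V. Let (uⁿ)_{n≥0} be a sequence in V satisfying the backward Euler recursion ⟨uⁿ − uⁿ⁻¹, v⟩ + Δt·aₙ(uⁿ, v) = 0 for all v ∈ V and all n ≥ 1. Then ‖uⁿ‖ ≤ ‖u⁰‖ for every n ≥ 0. -/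
open scoped InnerProductSpace

/-- Unconditional stability of the backward Euler Galerkin scheme:
if each bilinear form `aₙ` is positive semidefinite on the diagonal and
`⟨uⁿ − uⁿ⁻¹, v⟩ + Δt·aₙ(uⁿ,v) = 0` for all `v`, then `‖uⁿ‖ ≤ ‖u⁰‖`. -/
theorem backward_euler_unconditional_stability
    {V : Type*} [NormedAddCommGroup V] [InnerProductSpace ℝ V]
    (Δt : ℝ) (hΔt : 0 < Δt)
    (a : ℕ → V →ₗ[ℝ] V →ₗ[ℝ] ℝ)
    (ha : ∀ n, 1 ≤ n → ∀ v : V, 0 ≤ a n v v)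
    (u : ℕ → V)
    (hu : ∀ n, 1 ≤ n → ∀ v : V,
      ⟪u n - u (n - 1), v⟫_ℝ + Δt * a n (u n) v = 0) :
    ∀ n : ℕ, ‖u n‖ ≤ ‖u 0‖ := by
  intro n
  induction n with
  | zero => exact le_refl _
  | succ k ih =>
    refine le_trans ?_ ih
    have h := hu (k + 1) (by omega) (u (k + 1))
    have hp := mul_nonneg hΔt.le (ha (k + 1) (by omega) (u (k + 1)))
    rw [Nat.add_sub_cancel, inner_sub_left, real_inner_self_eq_norm_sq] at h
    have hc := real_inner_le_norm (u k) (u (k + 1))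
    by_contra hlt
    have hlt' := not_le.mp hlt
    have h0 := norm_nonneg (u k)
    nlinarith
end

section
/- Aubin–Nitsche L²-error bound: let V and H be real inner product spaces, ι : V → H a continuous linear map, B : V × V → ℝ a bilinear form with |B(w,v)| ≤ M‖w‖_V‖v‖_V for all w, v ∈ V, and S a subspace of V. Let u ∈ V and u_h ∈ S satisfy the Galerkin orthogonality B(u − u_h, v) = 0 for all v ∈ S. Suppose there exists ρ ≥ 0 such that for every ψ ∈ H there exist φ_ψ ∈ V with B(w, φ_ψ) = ⟨ι w, ψ⟩_H for all w ∈ V, and v_ψ ∈ S with ‖φ_ψ − v_ψ‖_V ≤ ρ‖ψ‖_H. Then ‖ι(u − u_h)‖_H ≤ M·ρ·‖u − u_h‖_V. -/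
open scoped InnerProductSpace

/-- Aubin–Nitsche L²-error bound: under Galerkin orthogonality and
solvability of the adjoint problem with approximation constant `ρ`, one has
`‖ι(u − u_h)‖_H ≤ M ρ ‖u − u_h‖_V`. -/
theorem aubin_nitsche_L2_error_bound
    {V H : Type*} [NormedAddCommGroup V] [InnerProductSpace ℝ V]
    [NormedAddCommGroup H] [InnerProductSpace ℝ H]
    (ι : V →L[ℝ] H)
    (B : V →ₗ[ℝ] V →ₗ[ℝ] ℝ)
    (M : ℝ) (hbound : ∀ w v : V, |B w v| ≤ M * ‖w‖ * ‖v‖)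
    (S : Submodule ℝ V)
    (u : V) (uh : V) (huh : uh ∈ S)
    (horth : ∀ v ∈ S, B (u - uh) v = 0)
    (ρ : ℝ) (hρ : 0 ≤ ρ)
    (hdual : ∀ ψ : H, ∃ φ : V, (∀ w : V, B w φ = ⟪ι w, ψ⟫_ℝ) ∧
      ∃ v ∈ S, ‖φ - v‖ ≤ ρ * ‖ψ‖) :
    ‖ι (u - uh)‖ ≤ M * ρ * ‖u - uh‖ := by
  generalize u - uh = e at *
  by_cases he : e = 0
  · simp [he]
  have hen : 0 < ‖e‖ := norm_pos_iff.mpr he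
  have hM : 0 ≤ M := by
    by_contra! hneg
    have h1 : 0 ≤ M * ‖e‖ * ‖e‖ := (abs_nonneg _).trans (hbound e e)
    nlinarith [mul_pos hen hen]
  obtain ⟨φ, hφ, v, hv, hle⟩ := hdual (ι e)
  have h1 : B e (φ - v) = ‖ι e‖ ^ 2 := by
    rw [map_sub, horth v hv, sub_zero, hφ e, real_inner_self_eq_norm_sq]
  have h2 : ‖ι e‖ ^ 2 ≤ M * ‖e‖ * (ρ * ‖ι e‖) := by
    rw [← h1]
    exact ((le_abs_self _).trans (hbound e (φ - v))).trans
      (mul_le_mul_of_nonneg_left hle (by positivity))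
  rcases (norm_nonneg (ι e)).eq_or_lt with h0 | h0
  · rw [← h0]
    positivity
  · refine le_of_mul_le_mul_right ?_ h0
    linarith
end
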